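/- arXiv:2112.07420 — 4 statements merged into one kernel-verified Lean document; each statement's English description precedes it below -/
import Mathlib

section
/- Let A ⊆ B be a symmetric C*-inclusion. Then the positive cone A⁺ residually supports B if and only if A⁺ fills B. -/
/- Common definitions for C*-inclusions, ideals, Cuntz subequivalence,
   supporting/filling families and pure infiniteness. -/

namespace KM

variable {B : Type*} [NonUnitalCStarAlgebra B] [PartialOrder B]

/-- `J` is a closed two-sided ideal of the C*-algebra `C` (given as a subset of `B`). -/
def IsIdealIn (C J : Set B) : Prop :=
  J ⊆ C ∧ IsClosed J ∧ (0 : B) ∈ J ∧ (∀ x ∈ J, ∀ y ∈ J, x + y ∈ J) ∧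
    (∀ (c : ℂ), ∀ x ∈ J, c • x ∈ J) ∧ (∀ x ∈ J, ∀ c ∈ C, c * x ∈ J ∧ x * c ∈ J)

/-- `J` is a closed two-sided ideal of `B`. -/
def IsIdeal (J : Set B) : Prop := IsIdealIn Set.univ J

/-- `A` is a C*-subalgebra of `B`: a closed `*`-subalgebra. -/
def IsSubCStar (A : Set B) : Prop :=
  IsClosed A ∧ (0 : B) ∈ A ∧ (∀ x ∈ A, ∀ y ∈ A, x + y ∈ A) ∧
    (∀ (c : ℂ), ∀ x ∈ A, c • x ∈ A) ∧ (∀ x ∈ A, ∀ y ∈ A, x * y ∈ A) ∧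
    (∀ x ∈ A, star x ∈ A)

/-- The smallest closed two-sided ideal of the C*-algebra `C` containing `S`. -/
def idealGenIn (C S : Set B) : Set B := ⋂₀ {J : Set B | IsIdealIn C J ∧ S ⊆ J}

/-- The smallest closed two-sided ideal of `B` containing `S`; for an ideal `I` of a
subalgebra `A` this is the induced ideal `BIB`. -/
def idealGen (S : Set B) : Set B := idealGenIn Set.univ S

/-- `I` is a restricted ideal of the subalgebra `A`, i.e. `I = J ∩ A` for an ideal `J` of `B`. -/
def IsRestricted (A I : Set B) : Prop := ∃ J : Set B, IsIdeal J ∧ I = J ∩ A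

/-- `J` is an induced ideal of `B`: `J = BIB` for some ideal `I` of `A`. -/
def IsInduced (A J : Set B) : Prop := ∃ I : Set B, IsIdealIn A I ∧ J = idealGen I

/-- `A` separates ideals in `B`. -/
def SeparatesIdeals (A : Set B) : Prop :=
  ∀ J₁ J₂ : Set B, IsIdeal J₁ → IsIdeal J₂ → J₁ ∩ A = J₂ ∩ A → J₁ = J₂

/-- Cuntz subequivalence `a ≼ b`. -/
def CuntzBelow (a b : B) : Prop :=
  ∀ ε : ℝ, 0 < ε → ∃ x : B, ‖a - star x * b * x‖ < ε

/-- `F` supports `B`. -/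
def Supports (F : Set B) : Prop :=
  ∀ b : B, 0 ≤ b → b ≠ 0 → ∃ a ∈ F, a ≠ 0 ∧ CuntzBelow a b

/-- `F` residually supports the C*-algebra `C ⊆ B`: for every ideal `J` of `C`, the image
of `F` in `C/J` supports `C/J`, phrased concretely via the distance to `J`. -/
def ResiduallySupportsIn (C F : Set B) : Prop :=
  ∀ J : Set B, IsIdealIn C J → ∀ b ∈ C, 0 ≤ b → b ∉ J →
    ∃ a ∈ F, a ∉ J ∧ ∀ ε : ℝ, 0 < ε → ∃ x ∈ C,
      Metric.infDist (a - star x * b * x) J < ε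

/-- `F` residually supports `B`. -/
def ResiduallySupports (F : Set B) : Prop := ResiduallySupportsIn Set.univ F

/-- `x` lies in `aB = {a c : c ∈ B}`. -/
def MemRightMul (a x : B) : Prop := ∃ c : B, x = a * c

/-- `a` is properly infinite in `B`. -/
def ProperlyInfinite (a : B) : Prop :=
  ∀ ε : ℝ, 0 < ε → ∃ x y : B, MemRightMul a x ∧ MemRightMul a y ∧
    ‖star x * x - a‖ ≤ ε ∧ ‖star y * y - a‖ ≤ ε ∧ ‖star x * y‖ ≤ ε

/-- `a` is infinite in `B`. -/
def InfiniteElt (a : B) : Prop :=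
  ∃ b : B, 0 ≤ b ∧ b ≠ 0 ∧ ∀ ε : ℝ, 0 < ε → ∃ x y : B,
    MemRightMul a x ∧ MemRightMul a y ∧
    ‖star x * x - a‖ ≤ ε ∧ ‖star y * y - b‖ ≤ ε ∧ ‖star x * y‖ ≤ ε

/-- The pair `a, b` is separated in `B`. -/
def SeparatedPair (a b : B) : Prop :=
  ∀ ε : ℝ, 0 < ε → ∃ x y : B, MemRightMul a x ∧ MemRightMul b y ∧
    ‖star x * x - a‖ ≤ ε ∧ ‖star y * y - b‖ ≤ ε ∧ ‖star x * y‖ ≤ ε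

/-- A character of `B`: a nonzero multiplicative linear functional `B → ℂ`. -/
def IsCharacter (φ : B →ₗ[ℂ] ℂ) : Prop :=
  (∀ x y : B, φ (x * y) = φ x * φ y) ∧ φ ≠ 0

/-- `B` is purely infinite: it admits no characters and for nonzero positive `a, b`,
`a ≼ b` iff `a` lies in the ideal generated by `b`. -/
def PurelyInfinite (B : Type*) [NonUnitalCStarAlgebra B] [PartialOrder B] : Prop :=
  (¬ ∃ φ : B →ₗ[ℂ] ℂ, IsCharacter φ) ∧
    ∀ a b : B, 0 ≤ a → a ≠ 0 → 0 ≤ b → b ≠ 0 → (CuntzBelow a b ↔ a ∈ idealGen {b})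

/-- `p` is a projection. -/
def IsProjection (p : B) : Prop := star p = p ∧ p * p = p

/-- `B` has the ideal property: projections separate ideals. -/
def IdealProperty (B : Type*) [NonUnitalCStarAlgebra B] [PartialOrder B] : Prop :=
  ∀ J₁ J₂ : Set B, IsIdeal J₁ → IsIdeal J₂ →
    (∀ p : B, IsProjection p → (p ∈ J₁ ↔ p ∈ J₂)) → J₁ = J₂

/-- `B` is strongly purely infinite: every pair of positive elements is separated. -/
def StronglyPurelyInfinite (B : Type*) [NonUnitalCStarAlgebra B] [PartialOrder B] : Prop :=
  ∀ a b : B, 0 ≤ a → 0 ≤ b → SeparatedPair a b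

/-- `D` is a hereditary C*-subalgebra of `B`. -/
def IsHereditary (D : Set B) : Prop :=
  IsSubCStar D ∧ ∀ b d : B, d ∈ D → 0 ≤ b → b ≤ d → b ∈ D

/-- `F` fills `B`. -/
def Fills (F : Set B) : Prop :=
  ∀ D : Set B, IsHereditary D → (∃ d ∈ D, d ≠ 0) →
    ∀ J : Set B, IsIdeal J → ¬ D ⊆ J →
      ∃ z : B, z ∉ J ∧ z * star z ∈ D ∧ star z * z ∈ F

/-- Closed linear span of a subset of `B`. -/
def closSpan (S : Set B) : Set B := closure ↑(Submodule.span ℂ S)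

/-- The C*-inclusion `A ⊆ B` is symmetric. -/
def SymmetricInclusion (A : Set B) : Prop :=
  ∀ I : Set B, IsRestricted A I →
    closSpan {z : B | ∃ x ∈ I, ∃ b : B, z = x * b} =
      closSpan {z : B | ∃ b : B, ∃ x ∈ I, z = b * x}

/-- `b` is a normaliser of `A` in `B`. -/
def IsNormalizer (A : Set B) (b : B) : Prop :=
  (∀ a ∈ A, b * a * star b ∈ A) ∧ (∀ a ∈ A, star b * a * b ∈ A)

/-- The inclusion `A ⊆ B` is nondegenerate: the closed span of `A·B` is `B`. -/
def Nondegenerate (A : Set B) : Prop :=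
  closSpan {z : B | ∃ a ∈ A, ∃ b : B, z = a * b} = Set.univ

/-- The inclusion `A ⊆ B` is regular: nondegenerate and `B` is the closed linear span of
the normalisers of `A`. -/
def RegularInclusion (A : Set B) : Prop :=
  Nondegenerate A ∧ closSpan {b : B | IsNormalizer A b} = Set.univ

end KM

open KM

variable {B : Type*} [NonUnitalCStarAlgebra B] [PartialOrder B] [StarOrderedRing B]



namespace KMaux

/-- Approximate-unit function. -/
noncomputable def gfun (δ t : ℝ) : ℝ := (t / max t δ) ^ 2

lemma gfun_cont {δ : ℝ} (hδ : 0 < δ) : Continuous (gfun δ) := by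
  unfold gfun
  have : ∀ t : ℝ, max t δ ≠ 0 := fun t => (lt_of_lt_of_le hδ (le_max_right _ _)).ne'
  fun_prop (disch := exact this _)

lemma gfun_zero (δ : ℝ) : gfun δ 0 = 0 := by simp [gfun]

lemma gfun_bounds {δ t : ℝ} (hδ : 0 < δ) (ht : 0 ≤ t) : 0 ≤ gfun δ t ∧ gfun δ t ≤ 1 := by
  refine ⟨sq_nonneg _, ?_⟩
  have hm : 0 < max t δ := lt_of_lt_of_le hδ (le_max_right _ _)
  have h1 : t / max t δ ≤ 1 := by rw [div_le_one hm]; exact le_max_left _ _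
  have h0 : 0 ≤ t / max t δ := by positivity
  unfold gfun
  nlinarith

lemma gfun_est {δ t : ℝ} (hδ : 0 < δ) (ht : 0 ≤ t) :
    0 ≤ t * (1 - gfun δ t) ^ 2 ∧ t * (1 - gfun δ t) ^ 2 ≤ δ := by
  obtain ⟨h0, h1⟩ := gfun_bounds hδ ht
  refine ⟨by positivity, ?_⟩
  rcases le_total δ t with h | h
  · have : gfun δ t = 1 := by
      unfold gfun
      rw [max_eq_left h, div_self (by linarith), one_pow]
    rw [this]; simp [hδ.le]
  · have : (1 - gfun δ t) ^ 2 ≤ 1 := by nlinarith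
    nlinarith

/-- Approximate unit element. -/
noncomputable def U (δ : ℝ) (h : B) : B := cfcₙ (gfun δ) h

lemma star_U (δ : ℝ) (h : B) : star (U δ h) = U δ h :=
  (cfcₙ_predicate (R := ℝ) (gfun δ) h : IsSelfAdjoint _)

lemma spec_nonneg {h : B} (hh : 0 ≤ h) {t : ℝ} (ht : t ∈ quasispectrum ℝ h) : 0 ≤ t :=
  quasispectrum_nonneg_of_nonneg h hh t ht

lemma norm_U {δ : ℝ} (hδ : 0 < δ) {h : B} (hh : 0 ≤ h) : ‖U δ h‖ ≤ 1 := by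
  refine norm_cfcₙ_le fun t ht => ?_
  obtain ⟨h0, h1⟩ := gfun_bounds hδ (spec_nonneg hh ht)
  rw [Real.norm_eq_abs, abs_of_nonneg h0]; exact h1

lemma U_eq {δ : ℝ} (hδ : 0 < δ) {h : B} (hh : 0 ≤ h) : ∃ k : B, U δ h = h * k := by
  refine ⟨cfcₙ (fun t : ℝ => t / (max t δ) ^ 2) h, ?_⟩
  have hs : IsSelfAdjoint h := hh.isSelfAdjoint
  have hm : ∀ t : ℝ, max t δ ≠ 0 := fun t => (lt_of_lt_of_le hδ (le_max_right _ _)).ne'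
  have hc : Continuous (fun t : ℝ => t / (max t δ) ^ 2) := by
    exact continuous_id.div (by fun_prop) (fun t => pow_ne_zero _ (hm t))
  conv_rhs => rw [← cfcₙ_id' ℝ h]
  conv_rhs => arg 2; rw [cfcₙ_id' ℝ h]
  rw [← cfcₙ_mul _ _ h (by fun_prop) rfl hc.continuousOn (by simp)]
  unfold U
  congr 1
  ext t
  unfold gfun
  ring

lemma sand_mono {p h u : B} (hu : star u = u) (hp : p ≤ h) :
    p - u * p - p * u + u * p * u ≤ h - u * h - h * u + u * h * u := by
  rw [← sub_nonneg]
  obtain ⟨q, hq⟩ := CStarAlgebra.nonneg_iff_eq_star_mul_self.mp (sub_nonneg.mpr hp)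
  have : h - u * h - h * u + u * h * u - (p - u * p - p * u + u * p * u)
      = star (q - q * u) * (q - q * u) := by
    have e : h = p + star q * q := by rw [← hq]; abel
    rw [e, star_sub, star_mul, hu]
    noncomm_ring
  rw [this]
  exact star_mul_self_nonneg _

lemma U_est {δ : ℝ} (hδ : 0 < δ) {h j : B} (hh : 0 ≤ h) (hj : star j * j ≤ h) :
    ‖j - j * U δ h‖ ^ 2 ≤ δ := by
  have hs : IsSelfAdjoint h := hh.isSelfAdjoint
  have hg := gfun_cont hδ
  have hg0 := gfun_zero δ
  set u := U δ h with hu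
  have e1 : star (j - j * u) * (j - j * u)
      = star j * j - u * (star j * j) - (star j * j) * u + u * (star j * j) * u := by
    rw [star_sub, star_mul, hu, star_U]
    noncomm_ring
  have e2 : h - u * h - h * u + u * h * u = cfcₙ (fun t : ℝ => t - gfun δ t * t - t * gfun δ t + gfun δ t * t * gfun δ t) h := by
    rw [cfcₙ_add _ _ h (by fun_prop) (by simp [hg0]) (by fun_prop) (by simp [hg0]),
      cfcₙ_sub _ _ h (by fun_prop) (by simp [hg0]) (by fun_prop) (by simp [hg0]),
      cfcₙ_sub _ _ h (by fun_prop) (by simp [hg0]) (by fun_prop) (by simp [hg0]),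
      cfcₙ_mul _ _ h (by fun_prop) (by simp [hg0]) (by fun_prop) (by simp [hg0]),
      cfcₙ_mul _ _ h (by fun_prop) (by simp [hg0]) (by fun_prop) (by simp [hg0]),
      cfcₙ_mul _ _ h (by fun_prop) (by simp [hg0]) (by fun_prop) (by simp [hg0]),
      cfcₙ_mul _ _ h (by fun_prop) (by simp [hg0]) (by fun_prop) (by simp [hg0]), cfcₙ_id' ℝ h]
    rfl
  rw [sq, ← CStarRing.norm_star_mul_self, e1]
  refine (CStarAlgebra.norm_le_norm_of_nonneg_of_le (by rw [← e1]; exact star_mul_self_nonneg _)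
    (sand_mono (star_U δ h) hj)).trans ?_
  rw [e2]
  refine norm_cfcₙ_le fun t ht => ?_
  obtain ⟨h0, h1⟩ := gfun_est hδ (spec_nonneg hh ht)
  have : t - gfun δ t * t - t * gfun δ t + gfun δ t * t * gfun δ t = t * (1 - gfun δ t) ^ 2 := by ring
  rw [this, Real.norm_eq_abs, abs_of_nonneg h0]; exact h1

/-- Continuous functional calculus stays inside C*-subalgebras. -/
lemma cfcn_mem {S : Set B} (hS : IsSubCStar S) (f : ℝ → ℝ) {h : B} (hh : h ∈ S) :
    cfcₙ f h ∈ S := by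
  obtain ⟨hc, h0, ha, hsm, hm, hst⟩ := hS
  let T : NonUnitalStarSubalgebra ℂ B :=
    { carrier := S
      add_mem' := fun {a b} h1 h2 => ha a h1 b h2
      zero_mem' := h0
      mul_mem' := fun {a b} h1 h2 => hm a h1 b h2
      smul_mem' := fun c x hx => hsm c x hx
      star_mem' := fun {a} h => hst a h }
  haveI : IsClosed (T : Set B) := hc
  exact cfcₙ_mem (𝕜' := ℂ) (s := T) f hh

end KMaux

namespace KMaux

/-- Truncated inverse square root. -/
noncomputable def ffun (δ t : ℝ) : ℝ := Real.sqrt t / max t δ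

lemma ffun_cont {δ : ℝ} (hδ : 0 < δ) : Continuous (ffun δ) := by
  unfold ffun
  have hm : ∀ t : ℝ, max t δ ≠ 0 := fun t => (lt_of_lt_of_le hδ (le_max_right _ _)).ne'
  exact Real.continuous_sqrt.div (by fun_prop) hm

lemma ffun_zero (δ : ℝ) : ffun δ 0 = 0 := by simp [ffun]

lemma sqrt_mul_ffun {δ t : ℝ} (ht : 0 ≤ t) : Real.sqrt t * ffun δ t = t / max t δ := by
  unfold ffun
  rw [← mul_div_assoc, Real.mul_self_sqrt ht]

lemma ffun_sq {δ t : ℝ} (ht : 0 ≤ t) : ffun δ t * t * ffun δ t = gfun δ t := by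
  unfold gfun
  rw [← sqrt_mul_ffun ht, mul_pow, Real.sq_sqrt ht]
  ring

lemma ffun_diff {δ δ' η t : ℝ} (hδ : 0 < δ) (hδ' : 0 < δ') (h1 : δ ≤ η) (h2 : δ' ≤ η)
    (ht : 0 ≤ t) : (Real.sqrt t * (ffun δ t - ffun δ' t)) * t *
      (Real.sqrt t * (ffun δ t - ffun δ' t)) ≤ η := by
  have e : Real.sqrt t * (ffun δ t - ffun δ' t) = t / max t δ - t / max t δ' := by
    rw [mul_sub, sqrt_mul_ffun ht, sqrt_mul_ffun ht]
  rw [e]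
  rcases le_total η t with h | h
  · rw [max_eq_left (h1.trans h), max_eq_left (h2.trans h)]
    simp; linarith
  · have b : ∀ d : ℝ, 0 < d → 0 ≤ t / max t d ∧ t / max t d ≤ 1 := by
      intro d hd
      have hm : 0 < max t d := lt_of_lt_of_le hd (le_max_right _ _)
      exact ⟨by positivity, by rw [div_le_one hm]; exact le_max_left _ _⟩
    obtain ⟨a1, a2⟩ := b δ hδ
    obtain ⟨b1, b2⟩ := b δ' hδ'
    have : (t / max t δ - t / max t δ') ^ 2 ≤ 1 := by
      rw [sq_le_one_iff_abs_le_one, abs_le]; constructor <;> linarith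
    nlinarith

lemma polar_step {δ δ' η : ℝ} (hδ : 0 < δ) (hδ' : 0 < δ') (h1 : δ ≤ η) (h2 : δ' ≤ η)
    {c e : B} (he : star e = e) (h : e * e ≤ star c * c) :
    ‖c * cfcₙ (ffun δ) (star c * c) * e - c * cfcₙ (ffun δ') (star c * c) * e‖ ^ 2 ≤ η := by
  set T := star c * c with hT
  have hT0 : 0 ≤ T := star_mul_self_nonneg c
  have hs : IsSelfAdjoint T := hT0.isSelfAdjoint
  have c1 := ffun_cont hδ
  have c2 := ffun_cont hδ'
  have z1 := ffun_zero δ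
  have z2 := ffun_zero δ'
  set k := cfcₙ (fun t : ℝ => ffun δ t - ffun δ' t) T with hk
  have ks : star k = k := (cfcₙ_predicate (R := ℝ) _ T : IsSelfAdjoint _)
  set q := cfcₙ (fun t : ℝ => Real.sqrt t * (ffun δ t - ffun δ' t)) T with hq
  have qs : star q = q := (cfcₙ_predicate (R := ℝ) _ T : IsSelfAdjoint _)
  have ek : k = cfcₙ (ffun δ) T - cfcₙ (ffun δ') T := by
    rw [hk, cfcₙ_sub _ _ T c1.continuousOn z1 c2.continuousOn z2]
  have w1 : c * cfcₙ (ffun δ) T * e - c * cfcₙ (ffun δ') T * e = c * k * e := by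
    rw [ek]; noncomm_ring
  have kq : k * T * k = q * q := by
    have a1 : k * T * k = cfcₙ (fun t : ℝ => (ffun δ t - ffun δ' t) * t *
        (ffun δ t - ffun δ' t)) T := by
      rw [cfcₙ_mul _ _ T (by fun_prop) (by simp) (by fun_prop) (by simp [z1, z2]),
        cfcₙ_mul _ _ T (by fun_prop) (by simp [z1, z2]) (by fun_prop) (by simp), cfcₙ_id' ℝ T]
    have a2 : q * q = cfcₙ (fun t : ℝ => (Real.sqrt t * (ffun δ t - ffun δ' t)) *
        (Real.sqrt t * (ffun δ t - ffun δ' t))) T := by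
      rw [cfcₙ_mul _ _ T (by fun_prop) (by simp) (by fun_prop) (by simp)]
    rw [a1, a2]
    refine cfcₙ_congr fun t ht => ?_
    have := Real.mul_self_sqrt (spec_nonneg hT0 ht)
    linear_combination (-(ffun δ t - ffun δ' t) ^ 2) * this
  have qTq : q * T * q = cfcₙ (fun t : ℝ => (Real.sqrt t * (ffun δ t - ffun δ' t)) * t *
        (Real.sqrt t * (ffun δ t - ffun δ' t))) T := by
    rw [cfcₙ_mul _ _ T (by fun_prop) (by simp) (by fun_prop) (by simp),
        cfcₙ_mul _ _ T (by fun_prop) (by simp) (by fun_prop) (by simp), cfcₙ_id' ℝ T]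
  have n1 : ‖c * k * e‖ ^ 2 = ‖q * e‖ ^ 2 := by
    rw [sq, sq, ← CStarRing.norm_star_mul_self, ← CStarRing.norm_star_mul_self]
    congr 1
    simp only [star_mul, he, ks, qs]
    calc e * (k * star c) * (c * k * e) = e * (k * (star c * c) * k) * e := by noncomm_ring
      _ = e * q * (q * e) := by rw [← hT, kq]; noncomm_ring
  have n2 : ‖q * e‖ ^ 2 = ‖q * (e * e) * q‖ := by
    rw [sq, ← CStarRing.norm_self_mul_star]
    congr 1
    simp only [star_mul, he, qs]
    noncomm_ring
  rw [w1, n1, n2]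
  have m0 : 0 ≤ q * (e * e) * q := by
    have : q * (e * e) * q = star (e * q) * (e * q) := by
      simp only [star_mul, he, qs]; noncomm_ring
    rw [this]; exact star_mul_self_nonneg _
  have m1 : q * (e * e) * q ≤ q * T * q := by
    have := star_left_conjugate_le_conjugate h q
    rwa [qs] at this
  refine (CStarAlgebra.norm_le_norm_of_nonneg_of_le m0 m1).trans ?_
  rw [qTq]
  refine norm_cfcₙ_le fun t ht => ?_
  have ht0 := spec_nonneg hT0 ht
  rw [Real.norm_eq_abs, abs_of_nonneg]
  · exact ffun_diff hδ hδ' h1 h2 ht0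
  · have : ∀ x : ℝ, 0 ≤ x * t * x := fun x => by nlinarith [mul_nonneg ht0 (mul_self_nonneg x)]
    exact this _

lemma polar {c e : B} (he : star e = e) (h : e * e ≤ star c * c) :
    ∃ z : B, star z * z = e * e ∧ z ∈ closure {w : B | ∃ y, w = c * y} := by
  set T := star c * c with hT
  have hT0 : 0 ≤ T := star_mul_self_nonneg c
  have hs : IsSelfAdjoint T := hT0.isSelfAdjoint
  let δ : ℕ → ℝ := fun n => 1 / ((n : ℝ) + 1)
  have hδ : ∀ n, 0 < δ n := fun n => Nat.one_div_pos_of_nat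
  have hδl : Filter.Tendsto δ Filter.atTop (nhds 0) := tendsto_one_div_add_atTop_nhds_zero_nat
  let z : ℕ → B := fun n => c * cfcₙ (ffun (δ n)) T * e
  have hc : CauchySeq z := by
    rw [Metric.cauchySeq_iff']
    intro ε hε
    obtain ⟨N, hN⟩ := ((hδl.eventually (gt_mem_nhds (show 0 < ε ^ 2 by positivity)))).exists
    refine ⟨N, fun n hn => ?_⟩
    rw [dist_eq_norm]
    have := polar_step (hδ n) (hδ N) (Nat.one_div_le_one_div hn) le_rfl he h
    exact lt_of_pow_lt_pow_left₀ 2 hε.le (this.trans_lt hN)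
  obtain ⟨w, hw⟩ := cauchySeq_tendsto_of_complete hc
  refine ⟨w, ?_, ?_⟩
  · have l1 : Filter.Tendsto (fun n => star (z n) * z n) Filter.atTop (nhds (star w * w)) :=
      (hw.star).mul hw
    have zz : ∀ n, star (z n) * z n = e * U (δ n) T * e := by
      intro n
      have c1 := ffun_cont (hδ n)
      have z1 := ffun_zero (δ n)
      have ks : star (cfcₙ (ffun (δ n)) T) = cfcₙ (ffun (δ n)) T :=
        (cfcₙ_predicate (R := ℝ) _ T : IsSelfAdjoint _)
      have a1 : cfcₙ (ffun (δ n)) T * T * cfcₙ (ffun (δ n)) T = U (δ n) T := by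
        have : cfcₙ (ffun (δ n)) T * T * cfcₙ (ffun (δ n)) T
            = cfcₙ (fun t : ℝ => ffun (δ n) t * t * ffun (δ n) t) T := by
          rw [cfcₙ_mul _ _ T (by fun_prop) (by simp) (by fun_prop) (by simp [z1]),
            cfcₙ_mul _ _ T (by fun_prop) (by simp [z1]) (by fun_prop) (by simp), cfcₙ_id' ℝ T]
        rw [this]
        exact cfcₙ_congr fun t ht => ffun_sq (spec_nonneg hT0 ht)
      rw [← a1]
      simp only [z, star_mul, he, ks]
      rw [hT]
      noncomm_ring
    have l2 : Filter.Tendsto (fun n => star (z n) * z n) Filter.atTop (nhds (e * e)) := by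
      rw [tendsto_iff_norm_sub_tendsto_zero]
      have b : ∀ n, ‖star (z n) * z n - e * e‖ ≤ Real.sqrt (δ n) * ‖e‖ := by
        intro n
        have h3 := U_est (hδ n) hT0 (j := e) (by rw [he]; exact h)
        have : star (z n) * z n - e * e = -((e - e * U (δ n) T) * e) := by
          rw [zz]; noncomm_ring
        rw [this, norm_neg]
        refine (norm_mul_le _ _).trans ?_
        gcongr
        exact Real.le_sqrt_of_sq_le h3
      refine squeeze_zero (fun _ => norm_nonneg _) b ?_
      have := ((Real.continuous_sqrt.tendsto 0).comp hδl).mul_const ‖e‖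
      simpa using this
    exact tendsto_nhds_unique l1 l2
  · refine mem_closure_of_tendsto hw (Filter.Eventually.of_forall fun n => ⟨_, mul_assoc _ _ _⟩)

end KMaux

namespace KMaux

lemma exists_sqrt {b : B} (hb : 0 ≤ b) : ∃ s : B, star s = s ∧ s * s = b :=
  ⟨CFC.sqrt b, (CFC.sqrt_nonneg b).isSelfAdjoint, CFC.sqrt_mul_sqrt_self b hb⟩

lemma mem_closed {S : Set B} (hS : IsClosed S) {z : B}
    (h : ∀ ε : ℝ, 0 < ε → ∃ y ∈ S, ‖z - y‖ < ε) : z ∈ S := by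
  rw [← hS.closure_eq, Metric.mem_closure_iff]
  intro ε hε
  obtain ⟨y, hy, h1⟩ := h ε hε
  exact ⟨y, hy, by rwa [dist_eq_norm]⟩

/-- Approximation by `j * U`. -/
lemma approx_U {h j : B} (hh : 0 ≤ h) (hj : star j * j ≤ h) {ε : ℝ} (hε : 0 < ε) :
    ∃ δ : ℝ, 0 < δ ∧ ‖j - j * U δ h‖ < ε := by
  refine ⟨(ε / 2) ^ 2, by positivity, ?_⟩
  have := U_est (show 0 < (ε / 2) ^ 2 by positivity) hh hj
  have := (pow_le_pow_iff_left₀ (norm_nonneg _) (by positivity) two_ne_zero).mp this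
  linarith

lemma ideal_of_star_mul {J : Set B} (hJ : IsIdeal J) {z : B} (hz : star z * z ∈ J) : z ∈ J := by
  obtain ⟨-, hc, h0, ha, hs, hm⟩ := hJ
  refine mem_closed hc fun ε hε => ?_
  have hh : 0 ≤ star z * z := star_mul_self_nonneg z
  obtain ⟨δ, hδ, h1⟩ := approx_U hh le_rfl hε
  obtain ⟨k, hk⟩ := U_eq hδ hh
  refine ⟨_, ?_, h1⟩
  rw [hk]
  exact (hm _ (hm _ hz k trivial).2 z trivial).1

lemma ideal_star {J : Set B} (hJ : IsIdeal J) {z : B} (hz : z ∈ J) : star z ∈ J := by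
  apply ideal_of_star_mul hJ
  rw [star_star]
  exact (hJ.2.2.2.2.2 _ hz _ trivial).2

lemma ideal_sub {J : Set B} (hJ : IsIdeal J) {x y : B} (hx : x ∈ J) (hy : y ∈ J) : x - y ∈ J := by
  have := hJ.2.2.2.1 x hx _ (hJ.2.2.2.2.1 (-1) y hy)
  rwa [neg_one_smul, ← sub_eq_add_neg] at this

lemma restr_sub {A J : Set B} (hA : IsSubCStar A) (hJ : IsIdeal J) : IsSubCStar (J ∩ A) := by
  have hst := fun z hz => ideal_star hJ (z := z) hz
  obtain ⟨-, hc, h0, ha, hs, hm⟩ := hJ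
  obtain ⟨hc', h0', ha', hs', hm', hst'⟩ := hA
  exact ⟨hc.inter hc', ⟨h0, h0'⟩, fun x hx y hy => ⟨ha x hx.1 y hy.1, ha' x hx.2 y hy.2⟩,
    fun c x hx => ⟨hs c x hx.1, hs' c x hx.2⟩,
    fun x hx y hy => ⟨(hm x hx.1 y trivial).2, hm' x hx.2 y hy.2⟩,
    fun x hx => ⟨hst x hx.1, hst' x hx.2⟩⟩

lemma real_smul_mem {A : Set B} (hA : ∀ (c : ℂ), ∀ x ∈ A, c • x ∈ A) (r : ℝ) {x : B}
    (hx : x ∈ A) : r • x ∈ A := by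
  have := hA (r : ℂ) x hx
  rwa [Complex.coe_smul] at this

lemma dom {I : Set B} (hI : IsSubCStar I) {w : B}
    (hw : w ∈ Submodule.span ℂ {z : B | ∃ b : B, ∃ x ∈ I, z = b * x}) :
    ∃ h ∈ I, 0 ≤ h ∧ star w * w ≤ h := by
  obtain ⟨hc, h0, ha, hs, hm, hst⟩ := hI
  induction hw using Submodule.span_induction with
  | mem w hw =>
    obtain ⟨b, x, hx, rfl⟩ := hw
    refine ⟨‖star b * b‖ • (star x * x), real_smul_mem hs _ (hm _ (hst _ hx) _ hx),
      smul_nonneg (norm_nonneg _) (star_mul_self_nonneg x), ?_⟩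
    have := CStarAlgebra.star_left_conjugate_le_norm_smul (a := x) (b := star b * b)
      (IsSelfAdjoint.star_mul_self b)
    rw [star_mul]
    simpa only [mul_assoc] using this
  | zero => exact ⟨0, h0, le_rfl, by simp⟩
  | add x y _ _ hx hy =>
    obtain ⟨h, h1, h2, h3⟩ := hx
    obtain ⟨k, k1, k2, k3⟩ := hy
    refine ⟨(h + k) + (h + k), ha _ (ha _ h1 _ k1) _ (ha _ h1 _ k1),
      add_nonneg (add_nonneg h2 k2) (add_nonneg h2 k2), ?_⟩
    have p : 0 ≤ star (x - y) * (x - y) := star_mul_self_nonneg _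
    have e : star (x + y) * (x + y) + star (x - y) * (x - y)
        = (star x * x + star y * y) + (star x * x + star y * y) := by
      rw [star_add, star_sub]; noncomm_ring
    calc star (x + y) * (x + y) ≤ star (x + y) * (x + y) + star (x - y) * (x - y) :=
          le_add_of_nonneg_right p
      _ = _ := e
      _ ≤ _ := add_le_add (add_le_add h3 k3) (add_le_add h3 k3)
  | smul c x _ hx =>
    obtain ⟨h, h1, h2, h3⟩ := hx
    refine ⟨(‖c‖ ^ 2) • h, real_smul_mem hs _ h1, smul_nonneg (by positivity) h2, ?_⟩
    have e : star (c • x) * (c • x) = (‖c‖ ^ 2) • (star x * x) := by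
      rw [star_smul, smul_mul_smul_comm, ← Complex.coe_smul]
      congr 1
      push_cast
      rw [← Complex.conj_mul']
      rfl
    rw [e]
    exact smul_le_smul_of_nonneg_left h3 (by positivity)

lemma approx_unit {I : Set B} (hI : IsSubCStar I) {j : B}
    (hj : j ∈ closSpan {z : B | ∃ b : B, ∃ x ∈ I, z = b * x}) {ε : ℝ} (hε : 0 < ε) :
    ∃ u ∈ I, star u = u ∧ ‖u‖ ≤ 1 ∧ ‖j - j * u‖ < ε := by
  obtain ⟨w, hw, h1⟩ := Metric.mem_closure_iff.mp hj (ε / 3) (by positivity)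
  obtain ⟨h, hh, h2, h3⟩ := dom hI hw
  obtain ⟨δ, hδ, h4⟩ := approx_U h2 h3 (show 0 < ε / 3 by positivity)
  have hu := norm_U hδ h2
  refine ⟨U δ h, cfcn_mem hI _ hh, star_U δ h, hu, ?_⟩
  rw [dist_eq_norm] at h1
  have e : j - j * U δ h = (j - w) + (w - w * U δ h) - (j - w) * U δ h := by noncomm_ring
  rw [e]
  have n1 := norm_sub_le ((j - w) + (w - w * U δ h)) ((j - w) * U δ h)
  have n2 := norm_add_le (j - w) (w - w * U δ h)
  have n3 := norm_mul_le (j - w) (U δ h)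
  have n4 : ‖j - w‖ * ‖U δ h‖ ≤ ‖j - w‖ := mul_le_of_le_one_right (norm_nonneg _) hu
  linarith

lemma closSpan_ideal {I : Set B}
    (hs : closSpan {z : B | ∃ x ∈ I, ∃ b : B, z = x * b} =
      closSpan {z : B | ∃ b : B, ∃ x ∈ I, z = b * x}) :
    IsIdeal (closSpan {z : B | ∃ x ∈ I, ∃ b : B, z = x * b}) := by
  have key : ∀ S : Set B, closSpan S = ((Submodule.span ℂ S).topologicalClosure : Set B) :=
    fun S => (Submodule.topologicalClosure_coe _).symm
  refine ⟨Set.subset_univ _, isClosed_closure, ?_, ?_, ?_, ?_⟩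
  · rw [key]; exact zero_mem _
  · intro x hx y hy; rw [key] at *; exact add_mem hx hy
  · intro c x hx; rw [key] at *; exact Submodule.smul_mem _ c hx
  · intro x hx c _
    constructor
    · rw [hs] at hx ⊢
      have hmap : Set.MapsTo (fun y => c * y)
          (Submodule.span ℂ {z : B | ∃ b : B, ∃ x ∈ I, z = b * x} : Set B)
          (Submodule.span ℂ {z : B | ∃ b : B, ∃ x ∈ I, z = b * x} : Set B) := by
        intro y hy
        induction hy using Submodule.span_induction with
        | mem w hw =>
          obtain ⟨b, x, hx, rfl⟩ := hw
          exact Submodule.subset_span ⟨c * b, x, hx, (mul_assoc _ _ _).symm⟩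
        | zero => simp
        | add x y _ _ hx hy => simp only [mul_add]; exact add_mem hx hy
        | smul r x _ hx => simp only [mul_smul_comm]; exact Submodule.smul_mem _ r hx
      exact hmap.closure (by fun_prop) hx
    · have hmap : Set.MapsTo (fun y => y * c)
          (Submodule.span ℂ {z : B | ∃ x ∈ I, ∃ b : B, z = x * b} : Set B)
          (Submodule.span ℂ {z : B | ∃ x ∈ I, ∃ b : B, z = x * b} : Set B) := by
        intro y hy
        induction hy using Submodule.span_induction with
        | mem w hw =>
          obtain ⟨x, hx, b, rfl⟩ := hw
          exact Submodule.subset_span ⟨x, hx, b * c, (mul_assoc _ _ _)⟩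
        | zero => simp
        | add x y _ _ hx hy => simp only [add_mul]; exact add_mem hx hy
        | smul r x _ hx => simp only [smul_mul_assoc]; exact Submodule.smul_mem _ r hx
      exact hmap.closure (by fun_prop) hx

lemma core {D : Set B} (hD : IsHereditary D) {b a x : B} {r : ℝ} (hr : 0 < r) (hb : 0 ≤ b)
    (hbD : b ∈ D) (ha : 0 ≤ a) (hx : ‖a - star x * b * x‖ ≤ r) :
    ∃ z : B, z * star z ∈ D ∧
      star z * z = r • (cfcₙ (fun t : ℝ => max (t - 2 * r) 0) a *
        cfcₙ (fun t : ℝ => max (t - 2 * r) 0) a) := by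
  set g : ℝ → ℝ := fun t => max (t - 2 * r) 0 with hg
  have gc : Continuous g := by fun_prop
  have g0 : g 0 = 0 := by simp [hg, hr.le]
  set e := cfcₙ g a with he
  have es : star e = e := (cfcₙ_predicate (R := ℝ) _ a : IsSelfAdjoint _)
  have as : IsSelfAdjoint a := ha.isSelfAdjoint
  obtain ⟨s, ss, hs⟩ := exists_sqrt hb
  have l1 : (2 * r) • (e * e) ≤ e * a * e := by
    have e1 : (2 * r) • (e * e) = cfcₙ (fun t : ℝ => (2 * r) * (g t * g t)) a := by
      rw [cfcₙ_const_mul (2 * r) _ a (by fun_prop) (by simp [g0]),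
        cfcₙ_mul _ _ a (by fun_prop) g0 (by fun_prop) g0]
    have e2 : e * a * e = cfcₙ (fun t : ℝ => g t * t * g t) a := by
      rw [cfcₙ_mul _ _ a (by fun_prop) (by simp) (by fun_prop) g0,
        cfcₙ_mul _ _ a (by fun_prop) g0 (by fun_prop) (by simp), cfcₙ_id' ℝ a]
    rw [e1, e2]
    refine cfcₙ_mono (fun t ht => ?_) (by fun_prop) (by fun_prop) (by simp [g0]) (by simp)
    have t0 := spec_nonneg ha ht
    rcases le_total t (2 * r) with h | h
    · have : g t = 0 := by simp [hg, h]
      simp [this]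
    · nlinarith [mul_self_nonneg (g t)]
  set y := star x * b * x with hy
  have ys : IsSelfAdjoint y := by
    rw [IsSelfAdjoint, hy]; simp [mul_assoc, hb.isSelfAdjoint.star_eq]
  have l2 : e * (a - y) * e ≤ r • (e * e) := by
    have := CStarAlgebra.star_left_conjugate_le_norm_smul (a := e) (b := a - y) (as.sub ys)
    rw [es] at this
    refine this.trans (smul_le_smul_of_nonneg_right hx ?_)
    have := star_mul_self_nonneg e
    rwa [es] at this
  have l3 : r • (e * e) ≤ e * y * e := by
    have e3 : e * y * e = e * a * e - e * (a - y) * e := by noncomm_ring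
    have e4 : r • (e * e) = (2 * r) • (e * e) - r • (e * e) := by
      rw [← sub_smul]; congr 1; ring
    rw [e3, e4]
    exact sub_le_sub l1 l2
  have ee : (Real.sqrt r • e) * (Real.sqrt r • e) = r • (e * e) := by
    rw [smul_mul_smul_comm, Real.mul_self_sqrt hr.le]
  have cc : star (s * x * e) * (s * x * e) = e * y * e := by
    simp only [star_mul, ss, es]
    rw [hy, ← hs]; noncomm_ring
  obtain ⟨z, hz, hzc⟩ := polar (c := s * x * e) (e := Real.sqrt r • e)
    (by rw [star_smul, es]; simp) (by rw [ee, cc]; exact l3)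
  refine ⟨z, ?_, by rw [hz, ee]⟩
  have hmap : Set.MapsTo (fun w : B => w * star w) {w : B | ∃ y, w = s * x * e * y} D := by
    rintro _ ⟨k, rfl⟩
    have e5 : (s * x * e * k) * star (s * x * e * k)
        = star s * ((x * e * k) * star (x * e * k)) * s := by
      simp only [star_mul, ss]; noncomm_ring
    have := CStarAlgebra.star_left_conjugate_le_norm_smul (a := s)
      (b := (x * e * k) * star (x * e * k)) (IsSelfAdjoint.mul_star_self _)
    rw [← e5, ss, hs] at this
    exact hD.2 _ _ (real_smul_mem hD.1.2.2.2.1 _ hbD) (mul_star_self_nonneg _) this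
  have := hmap.closure (by fun_prop) hzc
  rwa [hD.1.1.closure_eq] at this

end KMaux

namespace KMaux

lemma supports_of_fills {A : Set B} (hF : Fills {a : B | a ∈ A ∧ 0 ≤ a}) :
    ResiduallySupports {a : B | a ∈ A ∧ 0 ≤ a} := by
  intro J hJ b _ hb hbJ
  have hJ' : IsIdeal J := hJ
  set L : Set B := closure {w : B | ∃ c, w = b * c} with hL
  have Lc : IsClosed L := isClosed_closure
  have L0 : (0 : B) ∈ L := subset_closure ⟨0, by simp⟩
  have Ladd : ∀ x ∈ L, ∀ y ∈ L, x + y ∈ L := by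
    intro x hx y hy
    refine map_mem_closure₂ continuous_add hx hy ?_
    rintro _ ⟨c, rfl⟩ _ ⟨d, rfl⟩
    exact ⟨c + d, (mul_add _ _ _).symm⟩
  have Lsm : ∀ (r : ℂ), ∀ x ∈ L, r • x ∈ L := by
    intro r x hx
    refine map_mem_closure (continuous_const_smul r) hx ?_
    rintro _ ⟨c, rfl⟩
    exact ⟨r • c, (mul_smul_comm _ _ _).symm⟩
  have Lm : ∀ x ∈ L, ∀ y : B, x * y ∈ L := by
    intro x hx y
    refine map_mem_closure (f := fun x => x * y) (by fun_prop) hx ?_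
    rintro _ ⟨c, rfl⟩
    exact ⟨c * y, mul_assoc _ _ _⟩
  -- the main way to get into `L`
  have Lin : ∀ j h : B, h ∈ L → 0 ≤ h → star j * j ≤ h → star j ∈ L := by
    intro j h hh h0 hj
    refine mem_closed Lc fun ε hε => ?_
    obtain ⟨δ, hδ, h1⟩ := approx_U h0 hj hε
    obtain ⟨k, hk⟩ := U_eq hδ h0
    refine ⟨U δ h * star j, ?_, ?_⟩
    · rw [hk, mul_assoc]; exact Lm _ hh _
    · rw [← norm_star, star_sub, star_mul, star_star, star_U]; exact h1
  have hbs : star b = b := hb.isSelfAdjoint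
  have bL : b ∈ L := by
    have := Lin b (star b * b) (subset_closure ⟨b, by rw [hbs]⟩) (star_mul_self_nonneg b) le_rfl
    rwa [hbs] at this
  set D : Set B := {d | d ∈ L ∧ star d ∈ L} with hDdef
  have hD : IsHereditary D := by
    refine ⟨⟨?_, ⟨L0, by simpa using L0⟩, ?_, ?_, ?_, ?_⟩, ?_⟩
    · exact Lc.inter (Lc.preimage continuous_star)
    · intro x hx y hy
      exact ⟨Ladd _ hx.1 _ hy.1, by rw [star_add]; exact Ladd _ hx.2 _ hy.2⟩
    · intro c x hx
      exact ⟨Lsm _ _ hx.1, by rw [star_smul]; exact Lsm _ _ hx.2⟩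
    · intro x hx y hy
      exact ⟨Lm _ hx.1 _, by rw [star_mul]; exact Lm _ hy.2 _⟩
    · intro x hx
      exact ⟨hx.2, by rw [star_star]; exact hx.1⟩
    · intro x d hd hx hxd
      obtain ⟨s, ss, hs⟩ := exists_sqrt hx
      have sL := Lin s d hd.1 (hx.trans hxd) (by rw [ss, hs]; exact hxd)
      rw [ss] at sL
      have xL : x ∈ L := by rw [← hs]; exact Lm _ sL _
      exact ⟨xL, by rw [hx.isSelfAdjoint.star_eq]; exact xL⟩
  have bD : b ∈ D := ⟨bL, by rw [hbs]; exact bL⟩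
  obtain ⟨z, hzJ, hzD, hzA⟩ := hF D hD ⟨b, bD, fun h => hbJ (h ▸ hJ.2.2.1)⟩ J hJ
    (fun h => hbJ (h bD))
  refine ⟨star z * z, hzA, fun h => hzJ (ideal_of_star_mul hJ' h), fun ε hε => ?_⟩
  have zL : z ∈ L := by
    have := Lin (star z) (z * star z) hzD.1 (mul_star_self_nonneg z) (by rw [star_star])
    rwa [star_star] at this
  have op : IsOpen {w : B | ‖star z * z - star w * w‖ < ε} :=
    isOpen_lt (by fun_prop) continuous_const
  obtain ⟨w, hw, c, rfl⟩ := mem_closure_iff.mp zL _ op (by simpa using hε)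
  obtain ⟨s, ss, hs⟩ := exists_sqrt hb
  refine ⟨s * c, trivial, ?_⟩
  have e : star (s * c) * b * (s * c) = star (b * c) * (b * c) := by
    rw [star_mul, star_mul, ss, hbs, ← hs]; noncomm_ring
  rw [e]
  refine (Metric.infDist_le_dist_of_mem hJ.2.2.1).trans_lt ?_
  rw [dist_zero_right]
  exact hw

lemma fills_of_supports {A : Set B} (hA : IsSubCStar A) (hsym : SymmetricInclusion A)
    (hR : ResiduallySupports {a : B | a ∈ A ∧ 0 ≤ a}) :
    Fills {a : B | a ∈ A ∧ 0 ≤ a} := by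
  intro D hD _ J hJ hDJ
  have hIsub := restr_sub hA hJ
  have hs := hsym (J ∩ A) ⟨J, hJ, rfl⟩
  set K := closSpan {z : B | ∃ x ∈ J ∩ A, ∃ b : B, z = x * b} with hK
  have hKi : IsIdeal K := closSpan_ideal hs
  have hKJ : K ⊆ J := by
    let JS : Submodule ℂ B :=
      { carrier := J
        add_mem' := fun {a b} h1 h2 => hJ.2.2.2.1 a h1 b h2
        zero_mem' := hJ.2.2.1
        smul_mem' := fun c x hx => hJ.2.2.2.2.1 c x hx }
    refine closure_minimal ?_ hJ.2.1
    have : Submodule.span ℂ {z : B | ∃ x ∈ J ∩ A, ∃ b : B, z = x * b} ≤ JS := by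
      rw [Submodule.span_le]
      rintro _ ⟨x, hx, b, rfl⟩
      exact (hJ.2.2.2.2.2 x hx.1 b trivial).2
    exact this
  have hIK : ∀ a ∈ J ∩ A, a ∈ K := by
    intro a ha
    refine mem_closed hKi.2.1 fun ε hε => ?_
    obtain ⟨δ, hδ, h1⟩ := approx_U (star_mul_self_nonneg a) le_rfl hε
    exact ⟨_, subset_closure (Submodule.subset_span ⟨a, ha, _, rfl⟩), h1⟩
  have hJK : J ⊆ K := by
    intro j hj
    apply ideal_of_star_mul hKi
    by_contra hn
    have hb : star j * j ∈ J := (hJ.2.2.2.2.2 j hj _ trivial).1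
    obtain ⟨a, ⟨haA, ha0⟩, haK, h⟩ := hR K hKi (star j * j) trivial (star_mul_self_nonneg j) hn
    apply haK
    refine hIK a ⟨mem_closed hJ.2.1 fun ε hε => ?_, haA⟩
    obtain ⟨x, -, hx⟩ := h ε hε
    obtain ⟨k, hk, hd⟩ := (Metric.infDist_lt_iff ⟨0, hKi.2.2.1⟩).mp hx
    refine ⟨star x * (star j * j) * x + k, ?_, ?_⟩
    · refine hJ.2.2.2.1 _ ?_ _ (hKJ hk)
      exact (hJ.2.2.2.2.2 _ (hJ.2.2.2.2.2 _ hb _ trivial).1 _ trivial).2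
    · rw [dist_eq_norm] at hd
      rwa [← sub_sub]
  obtain ⟨d, hdD, hdJ⟩ := Set.not_subset.mp hDJ
  set b := star d * d with hbdef
  have hb : 0 ≤ b := star_mul_self_nonneg d
  have hbD : b ∈ D := hD.1.2.2.2.2.1 _ (hD.1.2.2.2.2.2 _ hdD) _ hdD
  have hbJ : b ∉ J := fun h => hdJ (ideal_of_star_mul hJ h)
  obtain ⟨a, ⟨haA, ha0⟩, haJ, h⟩ := hR J hJ b trivial hb hbJ
  have hη : 0 < Metric.infDist a J :=
    (hJ.2.1.notMem_iff_infDist_pos ⟨0, hJ.2.2.1⟩).mp haJ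
  set ε := Metric.infDist a J / 13 with hε
  have hε0 : 0 < ε := by positivity
  obtain ⟨x, -, hx⟩ := h ε hε0
  obtain ⟨j, hj, hd⟩ := (Metric.infDist_lt_iff ⟨0, hJ.2.2.1⟩).mp hx
  rw [dist_eq_norm] at hd
  have hjK := hJK hj
  rw [hs] at hjK
  obtain ⟨u, huI, us, hu1, hju⟩ := approx_unit hIsub hjK hε0
  set a' := a - u * a - a * u + u * a * u with ha'
  have subA : ∀ p ∈ A, ∀ q ∈ A, p - q ∈ A := by
    intro p hp q hq
    have := hA.2.2.1 p hp _ (hA.2.2.2.1 (-1) q hq)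
    rwa [neg_one_smul, ← sub_eq_add_neg] at this
  have mulA := hA.2.2.2.2.1
  have ha'A : a' ∈ A := hA.2.2.1 _ (subA _ (subA _ haA _ (mulA _ huI.2 _ haA)) _
    (mulA _ haA _ huI.2)) _ (mulA _ (mulA _ huI.2 _ haA) _ huI.2)
  have ha'0 : 0 ≤ a' := by
    have := sand_mono us ha0
    simpa using this
  have haa : a - a' ∈ J := by
    have : a - a' = u * a + a * u - u * (a * u) := by rw [ha']; noncomm_ring
    rw [this]
    exact ideal_sub hJ (hJ.2.2.2.1 _ (hJ.2.2.2.2.2 _ huI.1 _ trivial).2 _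
      (hJ.2.2.2.2.2 _ huI.1 _ trivial).1) (hJ.2.2.2.2.2 _ huI.1 _ trivial).2
  have hr : ‖a' - star (x - x * u) * b * (x - x * u)‖ ≤ 6 * ε := by
    set E := a - star x * b * x - j with hE
    have e : a' - star (x - x * u) * b * (x - x * u)
        = (E - u * E - (E - u * E) * u) + ((j - j * u) - u * (j - j * u)) := by
      rw [ha', hE, star_sub, star_mul, us]; noncomm_ring
    have q : ∀ y : B, ‖y - u * y‖ ≤ 2 * ‖y‖ := by
      intro y
      have n1 := norm_sub_le y (u * y)
      have n2 := norm_mul_le u y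
      have n3 : ‖u‖ * ‖y‖ ≤ ‖y‖ := mul_le_of_le_one_left (norm_nonneg _) hu1
      linarith
    have q' : ∀ y : B, ‖y - y * u‖ ≤ 2 * ‖y‖ := by
      intro y
      have n1 := norm_sub_le y (y * u)
      have n2 := norm_mul_le y u
      have n3 : ‖y‖ * ‖u‖ ≤ ‖y‖ := mul_le_of_le_one_right (norm_nonneg _) hu1
      linarith
    rw [e]
    have t1 := norm_add_le (E - u * E - (E - u * E) * u) ((j - j * u) - u * (j - j * u))
    have t2 := q' (E - u * E)
    have t3 := q E
    have t4 := q (j - j * u)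
    linarith
  have hr0 : 0 < 6 * ε := by positivity
  obtain ⟨z, hzD, hz⟩ := core hD hr0 hb hbD ha'0 hr
  set e := cfcₙ (fun t : ℝ => max (t - 2 * (6 * ε)) 0) a' with he
  have es : star e = e := (cfcₙ_predicate (R := ℝ) _ a' : IsSelfAdjoint _)
  have eA : e ∈ A := cfcn_mem hA _ ha'A
  have eJ : e ∉ J := by
    intro heJ
    have hsa : IsSelfAdjoint a' := ha'0.isSelfAdjoint
    have n : ‖a' - e‖ ≤ 12 * ε := by
      have : a' - e = cfcₙ (fun t : ℝ => t - max (t - 2 * (6 * ε)) 0) a' := by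
        rw [cfcₙ_sub _ _ a' (by fun_prop) rfl (by fun_prop) (by simp [hε0.le]), cfcₙ_id' ℝ a']
      rw [this]
      refine norm_cfcₙ_le fun t ht => ?_
      have t0 := spec_nonneg ha'0 ht
      rw [Real.norm_eq_abs, abs_le]
      rcases le_total (t - 2 * (6 * ε)) 0 with h | h
      · rw [max_eq_right h]; constructor <;> linarith
      · rw [max_eq_left h]; constructor <;> linarith
    have mem : (a - a') + e ∈ J := hJ.2.2.2.1 _ haa _ heJ
    have := Metric.infDist_le_dist_of_mem (x := a) mem
    rw [dist_eq_norm] at this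
    have e2 : a - ((a - a') + e) = a' - e := by abel
    rw [e2] at this
    linarith
  refine ⟨z, ?_, hzD, ?_, star_mul_self_nonneg z⟩
  · intro hzJ
    apply eJ
    apply ideal_of_star_mul hJ
    rw [es]
    have h1 : star z * z ∈ J := (hJ.2.2.2.2.2 _ hzJ _ trivial).1
    rw [hz] at h1
    have h2 := real_smul_mem hJ.2.2.2.2.1 (6 * ε)⁻¹ h1
    rwa [smul_smul, inv_mul_cancel₀ hr0.ne', one_smul] at h2
  · rw [hz]
    exact real_smul_mem hA.2.2.2.1 _ (mulA _ eA _ eA)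

end KMaux

/-- For a symmetric C*-inclusion `A ⊆ B`, the positive cone `A⁺` residually supports `B`
if and only if `A⁺` fills `B`. -/
theorem stmt1 (A : Set B) (hA : IsSubCStar A) (hsym : SymmetricInclusion A) :
    ResiduallySupports {a : B | a ∈ A ∧ 0 ≤ a} ↔ Fills {a : B | a ∈ A ∧ 0 ≤ a} := by
  exact ⟨KMaux.fills_of_supports hA hsym, KMaux.supports_of_fills⟩
end

section
/- Let A ⊆ B be a symmetric C*-inclusion with a conditional expectation E : B → A which is residually symmetric. Then A separates ideals in B if and only if E is residually faithful and E preserves ideals. -/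
open KM

variable {B : Type*} [NonUnitalCStarAlgebra B] [PartialOrder B] [StarOrderedRing B]


lemma km_key_fun (n t : ℝ) (hn : 0 < n) :
    ‖t * (1 - t * (n ^ 2 * t / (1 + n ^ 2 * t ^ 2))) ^ 2‖ ≤ 1 / n := by
  have h1 : 0 < 1 + n ^ 2 * t ^ 2 := by positivity
  have e : 1 - t * (n ^ 2 * t / (1 + n ^ 2 * t ^ 2)) = 1 / (1 + n ^ 2 * t ^ 2) := by
    field_simp; ring
  rw [e, Real.norm_eq_abs, abs_mul, abs_of_nonneg (by positivity : (0:ℝ) ≤ (1 / (1 + n ^ 2 * t ^ 2)) ^ 2),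
    div_pow, one_pow, mul_one_div, div_le_div_iff₀ (by positivity) hn, one_mul, ← sq_abs t]
  have ha := abs_nonneg t
  have h2 : 0 ≤ n ^ 2 * |t| ^ 2 := by positivity
  nlinarith [sq_nonneg (n * |t| - 1)]

/-- If `a* a ≤ y ∈ J` with `J` closed and absorbing on the left, then `a ∈ J`. -/
lemma km_key (J : Set B) (hJ : IsIdeal J) (a y : B) (hy : y ∈ J) (hay : star a * a ≤ y) :
    a ∈ J := by
  obtain ⟨-, hcl, -, -, -, hm⟩ := hJ
  have hy0 : 0 ≤ y := (star_mul_self_nonneg a).trans hay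
  have hysa : IsSelfAdjoint y := .of_nonneg hy0
  rw [← hcl.closure_eq, Metric.mem_closure_iff]
  intro ε hε
  obtain ⟨n, hn⟩ := exists_nat_one_div_lt (sq_pos_of_pos hε)
  set N : ℝ := (n : ℝ) + 1 with hN
  have hN0 : 0 < N := by positivity
  let h : ℝ → ℝ := fun t => N ^ 2 * t / (1 + N ^ 2 * t ^ 2)
  have hc : Continuous h := by
    apply Continuous.div (by fun_prop) (by fun_prop)
    intro t; positivity
  have h0 : h 0 = 0 := by simp [h]
  set k := cfcₙ h y with hk
  set e := k * y with he
  have hee : e = cfcₙ (fun t => h t * t) y := by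
    rw [he, cfcₙ_mul (hf := hc.continuousOn) (hf0 := h0) (hg := by fun_prop) (hg0 := rfl),
      cfcₙ_id' ℝ y]
  have hesa : star e = e := by
    rw [hee]; exact (cfcₙ_predicate (R := ℝ) (p := IsSelfAdjoint) (fun t => h t * t) y)
  have hTy : y - e * y - y * e + e * y * e
      = cfcₙ (fun t => t * (1 - t * (h t)) ^ 2) y := by
    have hc1 : ContinuousOn (fun t => h t * t) (quasispectrum ℝ y) := by fun_prop
    have hcid : ContinuousOn (fun t : ℝ => t) (quasispectrum ℝ y) := by fun_prop
    have z1 : (fun t => h t * t) 0 = 0 := by simp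
    have e1 : e * y = cfcₙ (fun t => h t * t * t) y := by
      rw [cfcₙ_mul (fun t => h t * t) (fun t => t) y hc1 z1 hcid rfl, cfcₙ_id' ℝ y, hee]
    have e2 : y * e = cfcₙ (fun t => t * (h t * t)) y := by
      rw [cfcₙ_mul (fun t => t) (fun t => h t * t) y hcid rfl hc1 z1, cfcₙ_id' ℝ y, hee]
    have e3 : e * y * e = cfcₙ (fun t => h t * t * t * (h t * t)) y := by
      rw [cfcₙ_mul (fun t => h t * t * t) (fun t => h t * t) y (by fun_prop) (by simp) hc1 z1,
        ← e1, ← hee]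
    rw [e3, e1, e2]
    nth_rewrite 1 [← cfcₙ_id' ℝ y]
    rw [← cfcₙ_sub (fun t => t) (fun t => h t * t * t) y hcid rfl (by fun_prop) (by simp),
      ← cfcₙ_sub (fun t => t - h t * t * t) (fun t => t * (h t * t)) y (by fun_prop) (by simp)
        (by fun_prop) (by simp),
      ← cfcₙ_add (fun t => t - h t * t * t - t * (h t * t)) (fun t => h t * t * t * (h t * t)) y
        (by fun_prop) (by simp) (by fun_prop) (by simp)]
    congr 1
    funext t
    ring
  have hT : ∀ c : B, star (c - c * e) * (c - c * e)
      = star c * c - e * (star c * c) - (star c * c) * e + e * (star c * c) * e := by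
    intro c
    rw [star_sub, star_mul, hesa]
    noncomm_ring
  obtain ⟨c, hcc⟩ := CStarAlgebra.nonneg_iff_eq_star_mul_self.mp (sub_nonneg.mpr hay)
  have hle : star (a - a * e) * (a - a * e) ≤ y - e * y - y * e + e * y * e := by
    rw [← sub_nonneg]
    have := star_mul_self_nonneg (c - c * e)
    rw [hT, ← hcc] at this
    rw [hT]
    convert this using 1
    noncomm_ring
  have hnorm : ‖a - a * e‖ * ‖a - a * e‖ ≤ 1 / N := by
    rw [← CStarRing.norm_star_mul_self]
    refine (CStarAlgebra.norm_le_norm_of_nonneg_of_le (star_mul_self_nonneg _) hle).trans ?_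
    rw [hTy]
    exact norm_cfcₙ_le fun t _ => km_key_fun N t hN0
  refine ⟨a * e, ?_, ?_⟩
  · rw [he, ← mul_assoc]
    exact (hm y hy (a * k) trivial).1
  · rw [dist_eq_norm]
    nlinarith [norm_nonneg (a - a * e)]

lemma km_hered (J : Set B) (hJ : IsIdeal J) (x y : B) (hx : 0 ≤ x) (hxy : x ≤ y) (hy : y ∈ J) :
    x ∈ J := by
  obtain ⟨s, rfl⟩ := CStarAlgebra.nonneg_iff_eq_star_mul_self.mp hx
  exact (hJ.2.2.2.2.2 s (km_key J hJ s y hy hxy) (star s) trivial).1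

lemma km_gen_ideal (S : Set B) : IsIdeal (idealGen S) := by
  refine ⟨Set.subset_univ _, isClosed_sInter fun J hJ => hJ.1.2.1, ?_, ?_, ?_, ?_⟩
  · exact fun J hJ => hJ.1.2.2.1
  · exact fun x hx y hy J hJ => hJ.1.2.2.2.1 x (hx J hJ) y (hy J hJ)
  · exact fun c x hx J hJ => hJ.1.2.2.2.2.1 c x (hx J hJ)
  · exact fun x hx c hc => ⟨fun J hJ => (hJ.1.2.2.2.2.2 x (hx J hJ) c hc).1,
      fun J hJ => (hJ.1.2.2.2.2.2 x (hx J hJ) c hc).2⟩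

lemma km_subset_gen (S : Set B) : S ⊆ idealGen S := fun _ hx _ hJ => hJ.2 hx

lemma km_gen_subset (S J : Set B) (hJ : IsIdeal J) (h : S ⊆ J) : idealGen S ⊆ J :=
  fun _ hx => hx J ⟨hJ, h⟩

lemma km_gen_inter (A J : Set B) (hJ : IsIdeal J) : idealGen (J ∩ A) ∩ A = J ∩ A := by
  apply Set.Subset.antisymm
  · exact Set.inter_subset_inter_left _ (km_gen_subset _ J hJ Set.inter_subset_left)
  · exact fun x hx => ⟨km_subset_gen _ hx, hx.2⟩

lemma km_map_star (E : B →ₗ[ℂ] B) (hEpos : ∀ b : B, 0 ≤ b → 0 ≤ E b) (b : B) :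
    E (star b) = star (E b) :=
  map_star (PositiveLinearMap.mk₀ E hEpos) b

lemma km_right_mod (A : Set B) (hA : IsSubCStar A) (E : B →ₗ[ℂ] B)
    (hEmem : ∀ b : B, E b ∈ A)
    (hEbimod : ∀ a ∈ A, ∀ c ∈ A, ∀ b : B, E (a * b * c) = a * E b * c)
    (b a : B) (ha : a ∈ A) : E (b * a) = E b * a := by
  obtain ⟨-, -, hadd, hsmul, hmul, hstar⟩ := hA
  set d := E (b * a) - E b * a with hd
  have hdA : d ∈ A := by
    have := hadd _ (hEmem (b * a)) _ (hsmul (-1) _ (hmul _ (hEmem b) _ ha))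
    rwa [neg_one_smul, ← sub_eq_add_neg] at this
  have h0 : star d * d * star d = 0 := by
    have h1 := hEbimod _ (hstar d hdA) _ (hstar d hdA) (b * a)
    have h2 := hEbimod _ (hstar d hdA) _ (hmul _ ha _ (hstar d hdA)) b
    have h3 : star d * (b * a) * star d = star d * b * (a * star d) := by noncomm_ring
    rw [h3, h2] at h1
    conv_lhs => enter [1, 2]; rw [hd]
    rw [mul_sub, sub_mul, ← h1]
    noncomm_ring
  have h4 : star d * d = 0 := by
    rw [← CStarRing.star_mul_self_eq_zero_iff]
    rw [star_mul, star_star, ← mul_assoc, h0, zero_mul]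
  have h5 : d = 0 := CStarRing.star_mul_self_eq_zero_iff d |>.mp h4
  exact sub_eq_zero.mp h5

lemma km_schwarz (A : Set B) (hA : IsSubCStar A) (E : B →ₗ[ℂ] B)
    (hEmem : ∀ b : B, E b ∈ A)
    (hEid : ∀ a ∈ A, E a = a)
    (hEpos : ∀ b : B, 0 ≤ b → 0 ≤ E b)
    (hEbimod : ∀ a ∈ A, ∀ c ∈ A, ∀ b : B, E (a * b * c) = a * E b * c)
    (b : B) : star (E b) * E b ≤ E (star b * b) := by
  have hr := km_right_mod A hA E hEmem hEbimod
  have hs := km_map_star E hEpos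
  have h1 : E (star b * E b) = star (E b) * E b := by rw [hr _ _ (hEmem b), hs]
  have h2 : E (star (E b) * b) = star (E b) * E b := by
    have := hs (star b * E b)
    rw [h1] at this
    simpa using this
  have h3 : E (star (E b) * E b) = star (E b) * E b :=
    hEid _ (hA.2.2.2.2.1 _ (hA.2.2.2.2.2 _ (hEmem b)) _ (hEmem b))
  have h := hEpos _ (star_mul_self_nonneg (b - E b))
  have e : star (b - E b) * (b - E b)
      = star b * b - star b * E b - star (E b) * b + star (E b) * E b := by
    rw [star_sub]; noncomm_ring
  rw [e, map_add, map_sub, map_sub, h1, h2, h3, sub_add_cancel] at h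
  exact sub_nonneg.mp h

/-- The set `{b | E (b* b) ∈ J}` is an ideal. -/
lemma km_N_ideal (A : Set B) (E : B →ₗ[ℂ] B)
    (hEmem : ∀ b : B, E b ∈ A)
    (hEnorm : ∀ b : B, ‖E b‖ ≤ ‖b‖)
    (hEpos : ∀ b : B, 0 ≤ b → 0 ≤ E b)
    (hEressym : ∀ I : Set B, IsRestricted A I → ∀ b : B,
      E (star b * b) ∈ I → E (b * star b) ∈ I)
    (J : Set B) (hJ : IsIdeal J) : IsIdeal {b : B | E (star b * b) ∈ J} := by
  have hmono : ∀ x y : B, x ≤ y → E x ≤ E y := fun x y hxy => by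
    have := hEpos _ (sub_nonneg.mpr hxy)
    rw [map_sub] at this
    exact sub_nonneg.mp this
  have hEc : Continuous E := by
    refine AddMonoidHomClass.continuous_of_bound E 1 fun x => ?_
    simpa using hEnorm x
  have hstar : ∀ b, E (star b * b) ∈ J → E (b * star b) ∈ J := fun b hb =>
    (hEressym _ ⟨J, hJ, rfl⟩ b ⟨hb, hEmem _⟩).1
  have hher : ∀ x y : B, 0 ≤ x → x ≤ y → E y ∈ J → E x ∈ J := fun x y h0 hxy hy =>
    km_hered J hJ _ _ (hEpos _ h0) (hmono _ _ hxy) hy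
  obtain ⟨-, hcl, hz, hadd, hsmul, hmul⟩ := hJ
  have hleft : ∀ b, E (star b * b) ∈ J → ∀ c : B, E (star (c * b) * (c * b)) ∈ J := by
    intro b hb c
    refine hher _ ((‖star c * c‖ : ℝ) • (star b * b)) (star_mul_self_nonneg _) ?_ ?_
    · have := CStarAlgebra.star_left_conjugate_le_norm_smul (a := b) (b := star c * c)
        (.star_mul_self c)
      simpa [mul_assoc] using this
    · rw [← Complex.coe_smul, map_smul]
      exact hsmul _ _ hb
  refine ⟨Set.subset_univ _, ?_, ?_, ?_, ?_, ?_⟩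
  · exact hcl.preimage (hEc.comp (continuous_star.mul continuous_id))
  · simpa using hz
  · intro x hx y hy
    refine hher _ ((star x * x + star y * y) + (star x * x + star y * y))
      (star_mul_self_nonneg _) ?_ ?_
    · rw [← sub_nonneg]
      have := star_mul_self_nonneg (x - y)
      convert this using 1
      rw [star_sub, star_add]
      noncomm_ring
    · rw [map_add, map_add]
      exact hadd _ (hadd _ hx _ hy) _ (hadd _ hx _ hy)
  · intro c x hx
    simp only [Set.mem_setOf_eq, star_smul, smul_mul_assoc, mul_smul_comm, map_smul] at hx ⊢
    exact hsmul _ _ (hsmul _ _ hx)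
  · intro x hx c _
    refine ⟨hleft x hx c, ?_⟩
    have h1 : E (star (star x) * star x) ∈ J := by simpa using hstar x hx
    have h2 := hstar _ (hleft (star x) h1 (star c))
    simpa using h2

/-- For a symmetric C*-inclusion `A ⊆ B` with a residually symmetric conditional
expectation `E : B → A`, the subalgebra `A` separates ideals in `B` iff `E` is residually
faithful and preserves ideals. -/
theorem stmt2 (A : Set B) (hA : IsSubCStar A) (hsym : SymmetricInclusion A)
    (E : B →ₗ[ℂ] B)
    (hEmem : ∀ b : B, E b ∈ A)
    (hEnorm : ∀ b : B, ‖E b‖ ≤ ‖b‖)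
    (hEid : ∀ a ∈ A, E a = a)
    (hEpos : ∀ b : B, 0 ≤ b → 0 ≤ E b)
    (hEbimod : ∀ a ∈ A, ∀ c ∈ A, ∀ b : B, E (a * b * c) = a * E b * c)
    (hEressym : ∀ I : Set B, IsRestricted A I → ∀ b : B,
      E (star b * b) ∈ I → E (b * star b) ∈ I) :
    SeparatesIdeals A ↔
      ((∀ I : Set B, IsRestricted A I → ∀ b : B, E (star b * b) ∈ I → b ∈ idealGen I) ∧
        (∀ J : Set B, IsIdeal J → ∀ b ∈ J, E b ∈ J)) := by
  constructor
  · intro hsep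
    have hgen : ∀ J : Set B, IsIdeal J → idealGen (J ∩ A) = J := fun J hJ =>
      hsep _ _ (km_gen_ideal _) hJ (km_gen_inter A J hJ)
    have hN : ∀ J : Set B, IsIdeal J → {b : B | E (star b * b) ∈ J} = J := by
      intro J hJ
      refine hsep _ _ (km_N_ideal A E hEmem hEnorm hEpos hEressym J hJ) hJ ?_
      ext a
      refine and_congr_left fun ha => ?_
      have : E (star a * a) = star a * a := hEid _ (hA.2.2.2.2.1 _ (hA.2.2.2.2.2 _ ha) _ ha)
      rw [Set.mem_setOf_eq, this]
      exact ⟨fun h => km_key J hJ a _ h le_rfl, fun h => (hJ.2.2.2.2.2 a h (star a) trivial).1⟩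
    refine ⟨?_, ?_⟩
    · rintro I ⟨J, hJ, rfl⟩ b hb
      rw [hgen J hJ, ← hN J hJ]
      exact hb.1
    · intro J hJ b hb
      rw [← hN J hJ] at hb
      exact km_key J hJ _ _ hb (km_schwarz A hA E hEmem hEid hEpos hEbimod b)
  · rintro ⟨hfaith, hpres⟩
    have hgen : ∀ J : Set B, IsIdeal J → idealGen (J ∩ A) = J := fun J hJ =>
      Set.Subset.antisymm (km_gen_subset _ J hJ Set.inter_subset_left) fun b hb =>
        hfaith _ ⟨J, hJ, rfl⟩ b
          ⟨hpres J hJ _ (hJ.2.2.2.2.2 b hb (star b) trivial).1, hEmem _⟩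
    intro J₁ J₂ h₁ h₂ h
    rw [← hgen J₁ h₁, ← hgen J₂ h₂, h]
end

section
/- Let A ⊆ B be a C*-inclusion. Then A separates ideals in B if and only if for every restricted ideal I of A and every ideal K of B with BIB ⊊ K one has I ⊊ K ∩ A. (The latter condition expresses that A/I detects ideals in the quotient B/BIB for every restricted ideal I of A.) -/
open KM

variable {B : Type*} [NonUnitalCStarAlgebra B] [PartialOrder B] [StarOrderedRing B]


theorem isIdeal_idealGen_aux {B : Type*} [NonUnitalCStarAlgebra B] [PartialOrder B]
    (S : Set B) : IsIdeal (idealGen S) := by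
  refine ⟨Set.subset_univ _, isClosed_sInter fun J hJ => hJ.1.2.1, fun J hJ => hJ.1.2.2.1,
    fun x hx y hy J hJ => hJ.1.2.2.2.1 x (hx J hJ) y (hy J hJ),
    fun c x hx J hJ => hJ.1.2.2.2.2.1 c x (hx J hJ), fun x hx c hc =>
      ⟨fun J hJ => (hJ.1.2.2.2.2.2 x (hx J hJ) c hc).1,
        fun J hJ => (hJ.1.2.2.2.2.2 x (hx J hJ) c hc).2⟩⟩

theorem subset_idealGen_aux {B : Type*} [NonUnitalCStarAlgebra B] [PartialOrder B]
    (S : Set B) : S ⊆ idealGen S := fun _ hx _ hJ => hJ.2 hx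

theorem idealGen_subset_aux {B : Type*} [NonUnitalCStarAlgebra B] [PartialOrder B]
    {S J : Set B} (hJ : IsIdeal J) (h : S ⊆ J) : idealGen S ⊆ J := fun _ hx => hx J ⟨hJ, h⟩

/-- `A` separates ideals in `B` iff for every restricted ideal `I` of `A` and every ideal
`K` of `B` with `BIB ⊊ K` one has `I ⊊ K ∩ A`. -/
theorem stmt4 (A : Set B) (hA : IsSubCStar A) :
    SeparatesIdeals A ↔
      ∀ I : Set B, IsRestricted A I → ∀ K : Set B, IsIdeal K →
        idealGen I ⊂ K → I ⊂ K ∩ A := by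
  constructor
  · rintro hs I ⟨J, hJ, rfl⟩ K hK hlt
    have hsub : J ∩ A ⊆ K ∩ A := fun x hx =>
      ⟨hlt.1 (subset_idealGen_aux _ hx), hx.2⟩
    refine hsub.ssubset_of_ne fun heq => hlt.ne ?_
    refine hs _ _ (isIdeal_idealGen_aux _) hK (heq ▸ ?_)
    apply Set.Subset.antisymm
    · exact fun x hx => ⟨idealGen_subset_aux hJ Set.inter_subset_left hx.1, hx.2⟩
    · exact fun x hx => ⟨subset_idealGen_aux _ hx, hx.2⟩
  · intro h J₁ J₂ h₁ h₂ heq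
    have key : ∀ J : Set B, IsIdeal J → idealGen (J ∩ A) = J := by
      intro J hJ
      by_contra hne
      exact (h _ ⟨J, hJ, rfl⟩ J hJ
        ((idealGen_subset_aux hJ Set.inter_subset_left).ssubset_of_ne hne)).ne rfl
    rw [← key J₁ h₁, heq, key J₂ h₂]
end

section
/- Let B be a C*-algebra and F ⊆ B⁺. (1) If F supports B, then for every ideal J of B and every nonzero b ∈ J⁺ there is a nonzero a ∈ F ∩ J with a ≼ b; in particular, every nonzero ideal of B contains a nonzero element of F. (2) If F residually supports B, then for every ideal J of B the set F ∩ J residually supports J, in the sense that for every ideal I of B with I ⊆ J and every b ∈ J⁺ with b ∉ I there is a ∈ F ∩ J with a ∉ I such that for every ε > 0 there is x ∈ B with dist(a − x* b x, I) < ε; moreover, F separates the ideals of B: any two ideals J₁ ≠ J₂ of B satisfy J₁ ∩ F ≠ J₂ ∩ F. -/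
open KM

variable {B : Type*} [NonUnitalCStarAlgebra B] [PartialOrder B] [StarOrderedRing B]


/-- A closed ideal containing `x* x` contains `x`. -/
theorem mem_of_star_mul_self_mem {I : Set B} (hI : IsIdeal I) {x : B}
    (hx : star x * x ∈ I) : x ∈ I := by
  obtain ⟨-, hcl, -, -, -, hmul⟩ := hI
  rw [← hcl.closure_eq, Metric.mem_closure_iff]
  intro ε hε
  set h : B := star x * x with hh
  have hsa : IsSelfAdjoint h := IsSelfAdjoint.star_mul_self x
  obtain ⟨δ, hδ, hδε⟩ : ∃ δ : ℝ, 0 < δ ∧ δ < ε ^ 2 := exists_between (by positivity)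
  have hpos : ∀ t : ℝ, t ^ 2 + δ ^ 2 ≠ 0 := fun t => by positivity
  let k : ℝ → ℝ := fun t => t / (t ^ 2 + δ ^ 2)
  have hkc : Continuous k := by
    exact continuous_id.div (by fun_prop) hpos
  have hk0 : k 0 = 0 := by simp [k]
  let c : B := cfcₙ k h
  have hc : IsSelfAdjoint c := cfcₙ_predicate k h
  have hcomm : c * h = h * c := (cfcₙ_commute_cfcₙ k id h |>.eq) |> fun e => by
    rwa [cfcₙ_id ℝ h hsa] at e
  refine ⟨x * (h * c), (hmul _ ((hmul _ hx c trivial).2) x trivial).1, ?_⟩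
  rw [dist_eq_norm]
  have key : star (x - x * (h * c)) * (x - x * (h * c)) =
      cfcₙ (fun t => t - t * (t * k t) - (t * k t) * t + (t * k t) * t * (t * k t)) h := by
    have e1 : cfcₙ (fun t : ℝ => t * k t) h = h * c := by
      rw [cfcₙ_mul (fun t : ℝ => t) k h (by fun_prop) (by simp) (by fun_prop) hk0,
        cfcₙ_id' ℝ h hsa]
    have e2 : cfcₙ (fun t : ℝ => t * (t * k t)) h = h * (h * c) := by
      rw [cfcₙ_mul (fun t : ℝ => t) (fun t => t * k t) h (by fun_prop) (by simp) (by fun_prop)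
        (by simp), cfcₙ_id' ℝ h hsa, e1]
    have e3 : cfcₙ (fun t : ℝ => t * k t * t) h = (h * c) * h := by
      rw [cfcₙ_mul (fun t : ℝ => t * k t) (fun t => t) h (by fun_prop) (by simp) (by fun_prop)
        (by simp), cfcₙ_id' ℝ h hsa, e1]
    have e4 : cfcₙ (fun t : ℝ => t * k t * t * (t * k t)) h = (h * c) * h * (h * c) := by
      rw [cfcₙ_mul (fun t : ℝ => t * k t * t) (fun t => t * k t) h (by fun_prop) (by simp)
        (by fun_prop) (by simp), e1, e3]
    rw [cfcₙ_add (fun t : ℝ => t - t * (t * k t) - (t * k t) * t)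
        (fun t => (t * k t) * t * (t * k t)) h (by fun_prop) (by simp) (by fun_prop) (by simp),
      cfcₙ_sub (fun t : ℝ => t - t * (t * k t)) (fun t => (t * k t) * t) h
        (by fun_prop) (by simp) (by fun_prop) (by simp),
      cfcₙ_sub (fun t : ℝ => t) (fun t => t * (t * k t)) h
        (by fun_prop) (by simp) (by fun_prop) (by simp), cfcₙ_id' ℝ h hsa, e2, e3, e4]
    have es : star (h * c) = h * c := by
      rw [star_mul, hc.star_eq, hsa.star_eq, hcomm]
    have hassoc : ∀ z : B, star x * (x * z) = h * z := fun z => by rw [hh, mul_assoc]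
    rw [star_sub, star_mul, es, sub_mul, mul_sub, mul_sub, mul_assoc (h * c) (star x) x,
      mul_assoc (h * c) (star x) _, hassoc, ← hh, ← mul_assoc (h * c) h]
    abel
  have hb : ‖star (x - x * (h * c)) * (x - x * (h * c))‖ ≤ δ := by
    rw [key]
    refine norm_cfcₙ_le fun t _ => ?_
    have e : t - t * (t * k t) - (t * k t) * t + (t * k t) * t * (t * k t)
        = (t * δ / (t ^ 2 + δ ^ 2)) * (δ ^ 2 / (t ^ 2 + δ ^ 2)) * δ := by
      have := hpos t
      simp only [k]
      field_simp
      ring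
    have b1 : |t * δ / (t ^ 2 + δ ^ 2)| ≤ 1 := by
      rw [abs_div, abs_of_pos (show 0 < t ^ 2 + δ ^ 2 by positivity),
        div_le_one (by positivity), abs_le]
      constructor <;> nlinarith [sq_nonneg (t + δ), sq_nonneg (t - δ)]
    have b2 : |δ ^ 2 / (t ^ 2 + δ ^ 2)| ≤ 1 := by
      rw [abs_of_nonneg (by positivity), div_le_one (by positivity)]
      nlinarith [sq_nonneg t]
    rw [e, Real.norm_eq_abs, abs_mul, abs_mul, abs_of_pos hδ]
    have := mul_le_one₀ b1 (abs_nonneg _) b2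
    nlinarith
  rw [CStarRing.norm_star_mul_self] at hb
  nlinarith [norm_nonneg (x - x * (h * c))]

theorem residual_aux {F : Set B} (hF : ResiduallySupports F) :
    ∀ J : Set B, IsIdeal J → ∀ I : Set B, IsIdeal I → I ⊆ J →
          ∀ b ∈ J, 0 ≤ b → b ∉ I →
            ∃ a ∈ F ∩ J, a ∉ I ∧ ∀ ε : ℝ, 0 < ε → ∃ x : B,
              Metric.infDist (a - star x * b * x) I < ε := by
  intro J hJ I hI hIJ b hb hb0 hbI
  obtain ⟨a, haF, haI, ha⟩ := hF I hI b trivial hb0 hbI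
  refine ⟨a, ⟨haF, ?_⟩, haI, fun ε hε => ?_⟩
  · obtain ⟨-, hcl, -, hadd, -, hmul⟩ := hJ
    rw [← hcl.closure_eq, Metric.mem_closure_iff]
    intro ε hε
    obtain ⟨x, -, hx⟩ := ha ε hε
    obtain ⟨y, hy, hxy⟩ := (Metric.infDist_lt_iff ⟨0, hI.2.2.1⟩).1 hx
    refine ⟨star x * b * x + y, hadd _ (hmul _ (hmul _ hb _ trivial).1 _ trivial).2 _
      (hIJ hy), ?_⟩
    rw [dist_eq_norm] at hxy ⊢
    rwa [← sub_sub]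
  · obtain ⟨x, -, hx⟩ := ha ε hε
    exact ⟨x, hx⟩

theorem separates_aux {F : Set B} (hF : ResiduallySupports F) {J₁ J₂ : Set B}
    (h₁ : IsIdeal J₁) (h₂ : IsIdeal J₂) (h : J₁ ∩ F ⊆ J₂) : J₁ ⊆ J₂ := by
  intro x hx
  by_contra hx2
  have hI : IsIdeal (J₁ ∩ J₂) := by
    obtain ⟨-, c1, z1, a1, s1, m1⟩ := h₁
    obtain ⟨-, c2, z2, a2, s2, m2⟩ := h₂
    exact ⟨Set.subset_univ _, c1.inter c2, ⟨z1, z2⟩,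
      fun x hx y hy => ⟨a1 x hx.1 y hy.1, a2 x hx.2 y hy.2⟩,
      fun c x hx => ⟨s1 c x hx.1, s2 c x hx.2⟩,
      fun x hx c hc => ⟨⟨(m1 x hx.1 c hc).1, (m2 x hx.2 c hc).1⟩,
        ⟨(m1 x hx.1 c hc).2, (m2 x hx.2 c hc).2⟩⟩⟩
  obtain ⟨a, ha, haI, -⟩ := residual_aux hF J₁ h₁ (J₁ ∩ J₂) hI Set.inter_subset_left
    (star x * x) (h₁.2.2.2.2.2 x hx _ trivial).1 (star_mul_self_nonneg x)
    (fun hm => hx2 (mem_of_star_mul_self_mem hI hm).2)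
  exact haI ⟨ha.2, h ⟨ha.2, ha.1⟩⟩

theorem supports_aux {F : Set B} (hF : Supports F) :
    ∀ J : Set B, IsIdeal J → ∀ b ∈ J, 0 ≤ b → b ≠ 0 →
          ∃ a ∈ F ∩ J, a ≠ 0 ∧ CuntzBelow a b := by
  intro J hJ b hb hb0 hbn
  obtain ⟨a, haF, ha0, ha⟩ := hF b hb0 hbn
  refine ⟨a, ⟨haF, ?_⟩, ha0, ha⟩
  obtain ⟨-, hcl, -, hadd, -, hmul⟩ := hJ
  rw [← hcl.closure_eq, Metric.mem_closure_iff]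
  intro ε hε
  obtain ⟨x, hx⟩ := ha ε hε
  exact ⟨star x * b * x, (hmul _ (hmul _ hb _ trivial).1 _ trivial).2, by rwa [dist_eq_norm]⟩

/-- (1) If `F` supports `B`, then for every ideal `J` and nonzero `b ∈ J⁺` there is a
nonzero `a ∈ F ∩ J` with `a ≼ b`; in particular every nonzero ideal contains a nonzero
element of `F`.  (2) If `F` residually supports `B`, then `F ∩ J` residually supports `J`
for every ideal `J`, and `F` separates the ideals of `B`. -/
theorem stmt5 (F : Set B) :
    (Supports F →
      (∀ J : Set B, IsIdeal J → ∀ b ∈ J, 0 ≤ b → b ≠ 0 →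
          ∃ a ∈ F ∩ J, a ≠ 0 ∧ CuntzBelow a b) ∧
        (∀ J : Set B, IsIdeal J → (∃ x ∈ J, x ≠ 0) → ∃ a ∈ F ∩ J, a ≠ 0)) ∧
    (ResiduallySupports F →
      (∀ J : Set B, IsIdeal J → ∀ I : Set B, IsIdeal I → I ⊆ J →
          ∀ b ∈ J, 0 ≤ b → b ∉ I →
            ∃ a ∈ F ∩ J, a ∉ I ∧ ∀ ε : ℝ, 0 < ε → ∃ x : B,
              Metric.infDist (a - star x * b * x) I < ε) ∧
        (∀ J₁ J₂ : Set B, IsIdeal J₁ → IsIdeal J₂ → J₁ ≠ J₂ → J₁ ∩ F ≠ J₂ ∩ F)) := by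
  refine ⟨fun hF => ⟨supports_aux hF, fun J hJ hx => ?_⟩, fun hF => ⟨residual_aux hF, ?_⟩⟩
  · obtain ⟨x, hx, hx0⟩ := hx
    obtain ⟨a, ha, ha0, -⟩ := supports_aux hF J hJ (star x * x)
      (hJ.2.2.2.2.2 x hx _ trivial).1 (star_mul_self_nonneg x)
      (fun h => hx0 ((CStarRing.star_mul_self_eq_zero_iff x).1 h))
    exact ⟨a, ha, ha0⟩
  · intro J₁ J₂ h₁ h₂ hne heq
    refine hne (Set.Subset.antisymm (separates_aux hF h₁ h₂ ?_) (separates_aux hF h₂ h₁ ?_))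
    · rw [heq]; exact Set.inter_subset_left
    · rw [← heq]; exact Set.inter_subset_left
end
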